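/- For every N ≥ 1 and every z ∈ ℂ with Im z ≠ 0, one has E((Tr G(z,M))²) = N · E(Tr(G(z,M) · V'_t(M))). -/

import Mathlib

open MeasureTheory Filter Finset

noncomputable section

namespace LoopEq

/-- The external field `V_t(x) = x^2/2 + ∑_{j=1}^v t_j x^j`. -/
def Vt (v : ℕ) (t : ℕ → ℝ) (x : ℝ) : ℝ :=
  x ^ 2 / 2 + ∑ j ∈ Finset.Icc 1 v, t j * x ^ j

/-- The derivative `V_t'(x) = x + ∑_{j=1}^v j t_j x^(j-1)`. -/
def Vt' (v : ℕ) (t : ℕ → ℝ) (x : ℝ) : ℝ :=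
  x + ∑ j ∈ Finset.Icc 1 v, (j : ℝ) * t j * x ^ (j - 1)

/-- The complex extension of `V_t'`. -/
def Vt'C (v : ℕ) (t : ℕ → ℝ) (z : ℂ) : ℂ :=
  z + ∑ j ∈ Finset.Icc 1 v, (j : ℂ) * (t j : ℂ) * z ^ (j - 1)

/-- The parameter domain `𝕋(T,γ)`. -/
def Tdom (v : ℕ) (T γ : ℝ) : Set (ℕ → ℝ) :=
  {t | Real.sqrt (∑ j ∈ Finset.Icc 1 v, t j ^ 2) ≤ T ∧
    γ * ∑ j ∈ Finset.Icc 1 (v - 1), |t j| < t v}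

/-- The (unnormalized) joint eigenvalue density
`∏_{j<ℓ} (λ_j - λ_ℓ)^2 exp(-N ∑_j V_t(λ_j))`. -/
def dens (v N : ℕ) (t : ℕ → ℝ) (x : Fin N → ℝ) : ℝ :=
  (∏ p ∈ Finset.univ.filter (fun p : Fin N × Fin N => p.1 < p.2), (x p.1 - x p.2) ^ 2) *
    Real.exp (-(N : ℝ) * ∑ i, Vt v t (x i))

/-- The eigenvalue partition function `Z_N(t)`. -/
def Z (v N : ℕ) (t : ℕ → ℝ) : ℝ :=
  ∫ x : Fin N → ℝ, dens v N t x

/-- Expectation of an eigenvalue statistic with respect to `P_{N,t}`. -/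
def Ee (v N : ℕ) (t : ℕ → ℝ) (f : (Fin N → ℝ) → ℝ) : ℝ :=
  (∫ x : Fin N → ℝ, f x * dens v N t x) / Z v N t

/-- The weighted logarithmic energy `∫ V_t dμ - ∫∫ log |λ-η| dμ dμ`. -/
def energy (v : ℕ) (t : ℕ → ℝ) (μ : Measure ℝ) : ℝ :=
  (∫ x, Vt v t x ∂μ) - ∫ x, (∫ y, Real.log |x - y| ∂μ) ∂μ

/-- `μ` is the equilibrium measure: a Borel probability measure minimizing the
weighted logarithmic energy. -/
def IsEqMeasure (v : ℕ) (t : ℕ → ℝ) (μ : Measure ℝ) : Prop :=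
  IsProbabilityMeasure μ ∧
    ∀ ν : Measure ℝ, IsProbabilityMeasure ν → energy v t μ ≤ energy v t ν

/-- The equilibrium density `(1/2π) χ_(α,β)(x) √((x-α)(β-x)) h(x)`. -/
def eqDensity (α β : ℝ) (h : Polynomial ℝ) (x : ℝ) : ℝ :=
  Set.indicator (Set.Ioo α β)
    (fun y => (2 * Real.pi)⁻¹ * Real.sqrt ((y - α) * (β - y)) * h.eval y) x

/-- The support of a measure on ℝ: points all of whose neighborhoods have
positive measure. -/
def msupport (μ : Measure ℝ) : Set ℝ :=
  {x | ∀ U ∈ nhds x, 0 < μ U}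

/-- `ρ` is the one-point function: the density of the expected empirical
measure of eigenvalues. -/
def IsOnePoint (v N : ℕ) (t : ℕ → ℝ) (ρ : ℝ → ℝ) : Prop :=
  ∀ A : Set ℝ, MeasurableSet A →
    ∫ x in A, ρ x = Ee v N t (fun x => (∑ j, Set.indicator A 1 (x j)) / N)

/-- Embedding of `v` real parameters `(t_1, …, t_v)` as a parameter function. -/
def pad (v : ℕ) (s : Fin v → ℝ) : ℕ → ℝ := fun j =>
  if h : 1 ≤ j ∧ j - 1 < v then s ⟨j - 1, h.2⟩ else 0

/-! Hermitian matrix model -/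

/-- Real coordinates for an `N × N` Hermitian matrix: the diagonal entries and
the real and imaginary parts of the above-diagonal entries. -/
abbrev coords (N : ℕ) :=
  (Fin N → ℝ) × ({p : Fin N × Fin N // p.1 < p.2} → ℝ × ℝ)

/-- The Hermitian matrix with the given real coordinates. -/
def herm (N : ℕ) (e : coords N) : Matrix (Fin N) (Fin N) ℂ := fun i j =>
  if hij : i < j then ⟨(e.2 ⟨(i, j), hij⟩).1, (e.2 ⟨(i, j), hij⟩).2⟩
  else if hji : j < i then ⟨(e.2 ⟨(j, i), hji⟩).1, -(e.2 ⟨(j, i), hji⟩).2⟩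
  else ((e.1 i : ℝ) : ℂ)

/-- The matrix external field `V_t(M) = M^2/2 + ∑_{j=1}^v t_j M^j`. -/
def VtM (v N : ℕ) (t : ℕ → ℝ) (M : Matrix (Fin N) (Fin N) ℂ) :
    Matrix (Fin N) (Fin N) ℂ :=
  (2⁻¹ : ℂ) • M ^ 2 + ∑ j ∈ Finset.Icc 1 v, ((t j : ℂ)) • M ^ j

/-- `V_t'(M) = M + ∑_{j=1}^v j t_j M^(j-1)`. -/
def Vt'M (v N : ℕ) (t : ℕ → ℝ) (M : Matrix (Fin N) (Fin N) ℂ) :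
    Matrix (Fin N) (Fin N) ℂ :=
  M + ∑ j ∈ Finset.Icc 1 v, ((j : ℂ) * (t j : ℂ)) • M ^ (j - 1)

/-- The unnormalized density `exp(-N Tr V_t(M))` of the unitary ensemble
measure in the real coordinates of the Hermitian matrix `M`. -/
def wt (v N : ℕ) (t : ℕ → ℝ) (e : coords N) : ℝ :=
  Real.exp (-(N : ℝ) * (Matrix.trace (VtM v N t (herm N e))).re)

/-- The matrix-model partition function `Z̃_N`. -/
def Zmat (v N : ℕ) (t : ℕ → ℝ) : ℝ :=
  ∫ e : coords N, wt v N t e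

/-- Expectation `E` of a matrix statistic with respect to the unitary ensemble
measure `μ_t`. -/
def Em (v N : ℕ) (t : ℕ → ℝ) (f : coords N → ℂ) : ℂ :=
  (∫ e : coords N, f e * (wt v N t e : ℂ)) / (Zmat v N t : ℂ)

/-- The Green's function (resolvent) `G(z, M) = (z - M)⁻¹`. -/
def G (N : ℕ) (z : ℂ) (M : Matrix (Fin N) (Fin N) ℂ) : Matrix (Fin N) (Fin N) ℂ :=
  (z • (1 : Matrix (Fin N) (Fin N) ℂ) - M)⁻¹

/-! Since the Gibbs density `w = exp (-β Tr V(M))` beats every power of `‖M‖`, the integral of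
`∂_B (w G)` vanishes for every Hermitian direction `B`. The derivative
`w (G B G - β Tr(V'(M) B) G)` is `ℂ`-linear in `B`, and every complex matrix is `H + i K` with `H`,
`K` Hermitian, so its integral vanishes for the matrix units `B = E_ij` as well. Taking the `(i, j)`
entry and summing over `i` and `j` turns `G B G` into `(Tr G)²` and `Tr(V'(M) B) G` into
`Tr(G V'(M))`. -/

section PolynomialGrowth

open Polynomial Bornology

lemma tendsto_eval_cobounded_atTop {P : ℝ[X]} (hdeg : P.natDegree ≠ 0)
    (heven : Even P.natDegree) (hlead : 0 < P.leadingCoeff) :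
    Tendsto P.eval (cobounded ℝ) atTop := by
  have hmonomial : Tendsto (fun x : ℝ => P.leadingCoeff * ‖x‖ ^ P.natDegree)
      (cobounded ℝ) atTop :=
    ((tendsto_pow_atTop hdeg).comp tendsto_norm_cobounded_atTop).const_mul_atTop hlead
  simp only [Real.norm_eq_abs, heven.pow_abs] at hmonomial
  exact P.isEquivalent_cobounded_leading_monomial.symm.tendsto_atTop hmonomial

lemma two_le_natDegree_of_tendsto {P : ℝ[X]} (hP : Tendsto P.eval (cobounded ℝ) atTop) :
    2 ≤ P.natDegree := by
  by_contra! hdeg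
  obtain ⟨a, b, rfl⟩ := exists_eq_X_add_C_of_natDegree_le_one (Nat.le_of_lt_succ hdeg)
  have hneg : Tendsto (fun x : ℝ => (C a * X + C b).eval (-x)) (cobounded ℝ) atTop :=
    hP.comp tendsto_neg_cobounded
  have hconst : Tendsto (fun _ : ℝ => 2 * b) (cobounded ℝ) atTop :=
    (hP.atTop_add_atTop hneg).congr fun x => by
      simp only [eval_add, eval_mul, eval_C, eval_X]
      ring
  exact not_tendsto_const_atTop _ _ hconst

lemma exists_quadratic_le_eval {P : ℝ[X]} (hP : Tendsto P.eval (cobounded ℝ) atTop) :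
    ∃ a > 0, ∃ b, ∀ x, a * x ^ 2 - b ≤ P.eval x := by
  have hdeg : (X ^ 2 : ℝ[X]).degree ≤ P.degree := by
    have htwo := two_le_natDegree_of_tendsto hP
    rw [degree_X_pow, degree_eq_natDegree (ne_zero_of_natDegree_gt htwo)]
    exact_mod_cast htwo
  obtain ⟨K, hK, hbound⟩ := (isBigO_cobounded_of_degree_le hdeg).exists_pos
  have hdiff : Tendsto (fun x => (K + 1) * P.eval x - x ^ 2) (cobounded ℝ) atTop := by
    refine tendsto_atTop_mono' _ ?_ hP
    filter_upwards [hbound.bound, hP.eventually_ge_atTop 0] with x hx hnonneg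
    simp only [eval_pow, eval_X, norm_pow, Real.norm_eq_abs, sq_abs, abs_of_nonneg hnonneg] at hx
    linarith
  rw [Metric.cobounded_eq_cocompact] at hdiff
  obtain ⟨x₀, hx₀⟩ := Continuous.exists_forall_le (by fun_prop) hdiff
  refine ⟨1 / (K + 1), by positivity, -((K + 1) * P.eval x₀ - x₀ ^ 2) / (K + 1), fun x => ?_⟩
  rw [div_mul_eq_mul_div, ← sub_div, div_le_iff₀ (by positivity)]
  linarith [hx₀ x]

end PolynomialGrowth

section Calculus

open Polynomial

lemma hasFDerivAt_resolvent {𝕜 A R : Type*} [NontriviallyNormedField 𝕜] [NormedRing A]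
    [HasSummableGeomSeries A] [NormedAlgebra 𝕜 A] [CommSemiring R] [Algebra R A] {a : A} {z : R}
    (hz : z ∈ resolventSet R a) :
    HasFDerivAt (fun x : A => resolvent x z)
      (ContinuousLinearMap.mulLeftRight 𝕜 A (resolvent a z) (resolvent a z)) a := by
  have hsub : HasFDerivAt (fun x : A => algebraMap R A z - x) (-ContinuousLinearMap.id 𝕜 A) a :=
    (hasFDerivAt_id a).const_sub _
  have hinv := (hasFDerivAt_ringInverse (𝕜 := 𝕜) hz.unit).comp a hsub
  rw [← spectrum.resolvent_eq hz] at hinv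
  refine hinv.congr_fderiv ?_
  ext
  simp

lemma hasDerivAt_tracial_aeval {A B : Type*} [NormedRing A] [NormedAlgebra ℝ A]
    [NormedAddCommGroup B] [NormedSpace ℝ B] {τ : A →L[ℝ] B} (hτ : ∀ a b, τ (a * b) = τ (b * a))
    {F : ℝ → A} {D : A} {s : ℝ} (hF : HasDerivAt F D s) (P : ℝ[X]) :
    HasDerivAt (fun s => τ (aeval (F s) P)) (τ (aeval (F s) (derivative P) * D)) s := by
  induction P using Polynomial.induction_on' with
  | add P Q hP hQ => simpa only [map_add, add_mul] using hP.fun_add hQ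
  | monomial k c =>
    have hcycle : ∑ i ∈ range k, τ (F s ^ (k - 1 - i) * D * F s ^ i) =
        k • τ (F s ^ (k - 1) * D) := by
      refine (sum_congr rfl fun i hi => ?_).trans (by rw [sum_const, card_range])
      rw [hτ, ← mul_assoc, ← pow_add]
      congr 3
      have hlt := mem_range.1 hi
      omega
    have hpow := (τ.hasFDerivAt.comp_hasDerivAt s (hF.fun_pow' k)).const_smul c
    simp only [map_sum, Nat.pred_eq_sub_one, hcycle] at hpow
    convert hpow using 1
    · ext s
      simp [aeval_monomial, Algebra.algebraMap_eq_smul_one]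
    · simp only [derivative_monomial, aeval_monomial, Algebra.algebraMap_eq_smul_one, mul_smul,
        smul_mul_assoc, one_mul, map_smul, map_nsmul, Nat.cast_smul_eq_nsmul]

lemma integral_eq_zero_of_hasLineDerivAt {E F : Type*} [NormedAddCommGroup E] [NormedSpace ℝ E]
    [FiniteDimensional ℝ E] [MeasurableSpace E] [BorelSpace E] {μ : Measure E}
    [μ.IsAddHaarMeasure] [NormedAddCommGroup F] [NormedSpace ℝ F] {f f' : E → F} {u : E}
    (hf : Integrable f μ) (hf' : Integrable f' μ) (h : ∀ x, HasLineDerivAt ℝ f (f' x) x u) :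
    ∫ x, f' x ∂μ = 0 := by
  have hone : ∀ x, HasLineDerivAt ℝ (fun _ : E => (1 : ℝ)) 0 x u := fun x =>
    (hasFDerivAt_const (1 : ℝ) x).hasLineDerivAt u
  simpa using integral_bilinear_hasLineDerivAt_right_eq_neg_left_of_integrable
    (B := ContinuousLinearMap.lsmul ℝ ℝ) (μ := μ) (v := u) (f := fun _ => (1 : ℝ))
    (f' := fun _ => 0) (g := f) (g' := f') (by simp) (by simpa using hf') (by simpa using hf)
    (fun x _ => hone x) (fun x _ => h x)

end Calculus

section SelfAdjointResolvent

open ComplexConjugate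

lemma resolvent_sub_star_resolvent {A : Type*} [Ring A] [StarRing A] [Algebra ℂ A]
    [StarModule ℂ A] {a : A} (ha : IsSelfAdjoint a) {z : ℂ} (hz : z ∈ resolventSet ℂ a) :
    resolvent a z - star (resolvent a z) =
      (conj z - z) • (resolvent a z * star (resolvent a z)) := by
  set g := resolvent a z
  have hleft : g * (algebraMap ℂ A z - a) = 1 := Ring.inverse_mul_cancel _ hz
  have hright : (algebraMap ℂ A (conj z) - a) * star g = 1 := by
    rw [← star_one A, ← hleft, star_mul, star_sub, ha.star_eq, ← algebraMap_star_comm,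
      starRingEnd_apply]
  calc g - star g
      = g * ((algebraMap ℂ A (conj z) - a) * star g) -
          g * (algebraMap ℂ A z - a) * star g := by rw [hright, hleft, mul_one, one_mul]
    _ = g * algebraMap ℂ A (conj z - z) * star g := by rw [map_sub]; noncomm_ring
    _ = (conj z - z) • (g * star g) := by
      rw [← Algebra.commutes, ← Algebra.smul_def, smul_mul_assoc]

variable {A : Type*} [CStarAlgebra A] {a : A} {z : ℂ}

lemma mem_resolventSet_of_im_ne_zero (ha : IsSelfAdjoint a) (hz : z.im ≠ 0) :
    z ∈ resolventSet ℂ a := by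
  by_contra hspec
  exact hz (by rw [ha.mem_spectrum_eq_re hspec, Complex.ofReal_im])

lemma norm_resolvent_le (ha : IsSelfAdjoint a) (hz : z.im ≠ 0) :
    ‖resolvent a z‖ ≤ |z.im|⁻¹ := by
  set g := resolvent a z
  have hidentity : 2 * |z.im| * ‖g‖ ^ 2 = ‖g - star g‖ := by
    rw [resolvent_sub_star_resolvent ha (mem_resolventSet_of_im_ne_zero ha hz), norm_smul,
      CStarRing.norm_self_mul_star, norm_sub_rev, Complex.sub_conj, norm_mul, Complex.norm_I,
      Complex.norm_real, norm_mul, Real.norm_ofNat, Real.norm_eq_abs, mul_one, sq]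
  have htriangle : ‖g - star g‖ ≤ 2 * ‖g‖ := by
    simpa [two_mul] using norm_sub_le g (star g)
  rw [← one_div, le_div_iff₀ (abs_pos.2 hz)]
  rcases (norm_nonneg g).eq_or_lt with hzero | hpos
  · simp [← hzero]
  · exact le_of_mul_le_mul_right (by linarith) (mul_pos two_pos hpos)

end SelfAdjointResolvent

section MatrixUnits

variable {n R : Type*} [Fintype n] [DecidableEq n] [CommSemiring R]

lemma sum_mul_single_mul_apply (A B : Matrix n n R) :
    ∑ i, ∑ j, (A * Matrix.single i j (1 : R) * B : Matrix n n R) i j = A.trace * B.trace := by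
  simp [Matrix.trace, sum_mul_sum, Matrix.mul_apply, Matrix.single_apply, ite_and]

lemma sum_trace_mul_single_mul_apply (A B : Matrix n n R) :
    ∑ i, ∑ j, (A * Matrix.single i j (1 : R)).trace * B i j = (A * B).trace := by
  rw [sum_comm]
  simp only [Matrix.trace_mul_single, MulOpposite.smul_eq_mul_unop, MulOpposite.unop_op, mul_one]
  rfl

end MatrixUnits

section HermitianTrace

open Polynomial
open scoped Matrix.Norms.L2Operator

variable {n : Type*} [Fintype n]

lemma ofReal_re_trace_mul {A B : Matrix n n ℂ} (hA : A.IsHermitian) (hB : B.IsHermitian) :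
    ((A * B).trace.re : ℂ) = (A * B).trace := by
  rw [← Complex.conj_eq_iff_re, starRingEnd_apply, ← Matrix.trace_conjTranspose,
    Matrix.conjTranspose_mul, hA.eq, hB.eq, Matrix.trace_mul_comm]

variable [DecidableEq n] {M : Matrix n n ℂ}

lemma isHermitian_aeval (hM : M.IsHermitian) (P : ℝ[X]) : (aeval M P).IsHermitian := by
  rw [← cfc_polynomial P M hM.isSelfAdjoint]
  exact cfc_predicate _ _

lemma trace_aeval_eq_sum (hM : M.IsHermitian) (P : ℝ[X]) :
    (aeval M P).trace = ((∑ i, P.eval (hM.eigenvalues i) : ℝ) : ℂ) := by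
  have hdiag : aeval M P = Unitary.conjStarAlgAut ℂ _ hM.eigenvectorUnitary
      (Matrix.diagonal fun i => (P.eval (hM.eigenvalues i) : ℝ)) := by
    rw [← cfc_polynomial P M hM.isSelfAdjoint, hM.cfc_eq]
    rfl
  rw [hdiag, Unitary.conjStarAlgAut_apply, Matrix.trace_mul_cycle, Unitary.coe_star_mul_self,
    one_mul, Matrix.trace_diagonal, Complex.ofReal_sum]

lemma norm_eq_norm_eigenvalues {𝕜 : Type*} [RCLike 𝕜] {M : Matrix n n 𝕜}
    (hM : M.IsHermitian) : ‖M‖ = ‖hM.eigenvalues‖ := by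
  have hnorm := congrArg norm hM.spectral_theorem
  rw [Unitary.conjStarAlgAut_apply, ← Unitary.coe_star, CStarRing.norm_mul_coe_unitary,
    CStarRing.norm_coe_unitary_mul, Matrix.l2_opNorm_diagonal] at hnorm
  simp [hnorm, Pi.norm_def]

lemma norm_sq_le_trace_sq (hM : M.IsHermitian) : ‖M‖ ^ 2 ≤ (M ^ 2).trace.re := by
  have htrace := trace_aeval_eq_sum hM (X ^ 2)
  simp only [map_pow, aeval_X, eval_pow, eval_X] at htrace
  rw [htrace, Complex.ofReal_re, norm_eq_norm_eigenvalues hM,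
    ← Real.le_sqrt (by positivity) (by positivity)]
  refine (pi_norm_le_iff_of_nonneg (Real.sqrt_nonneg _)).2 fun i => Real.le_sqrt_of_sq_le ?_
  rw [Real.norm_eq_abs, sq_abs]
  exact single_le_sum (f := fun i => hM.eigenvalues i ^ 2) (fun j _ => sq_nonneg _) (mem_univ i)

lemma trace_aeval_re_mono (hM : M.IsHermitian) {P Q : ℝ[X]} (h : ∀ x, P.eval x ≤ Q.eval x) :
    (aeval M P).trace.re ≤ (aeval M Q).trace.re := by
  simp only [trace_aeval_eq_sum hM, Complex.ofReal_re]
  exact sum_le_sum fun i _ => h _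

end HermitianTrace

section GaussianDecay

open Asymptotics Polynomial Nat

lemma one_add_pow_le_exp_sq {c r : ℝ} (hc : 0 < c) (hr : 0 ≤ r) (m : ℕ) :
    (1 + r) ^ m ≤ (2 / c) ^ m * m ! * Real.exp (c * (1 + r ^ 2)) := by
  have hexp : (c * (1 + r ^ 2)) ^ m ≤ m ! * Real.exp (c * (1 + r ^ 2)) := by
    rw [← div_le_iff₀' (by positivity)]
    exact Real.pow_div_factorial_le_exp _ (by positivity) m
  calc (1 + r) ^ m ≤ (2 / c * (c * (1 + r ^ 2))) ^ m := by
        rw [← mul_assoc, div_mul_cancel₀ _ hc.ne']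
        gcongr
        nlinarith [sq_nonneg (r - 1)]
    _ ≤ (2 / c) ^ m * (m ! * Real.exp (c * (1 + r ^ 2))) := by
        rw [mul_pow]
        gcongr
    _ = _ := (mul_assoc ..).symm

lemma exp_neg_sq_isBigO_one_add_norm_inv_pow {E : Type*} [SeminormedAddGroup E] {c : ℝ}
    (hc : 0 < c) (m : ℕ) :
    (fun x : E => Real.exp (-c * ‖x‖ ^ 2)) =O[⊤] fun x => ((1 + ‖x‖) ^ m)⁻¹ := by
  refine .of_bound ((2 / c) ^ m * m ! * Real.exp c) (.of_forall fun x => ?_)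
  have hpow := one_add_pow_le_exp_sq hc (norm_nonneg x) m
  rw [Real.norm_of_nonneg (by positivity), Real.norm_of_nonneg (by positivity),
    ← div_eq_mul_inv, le_div_iff₀ (by positivity), neg_mul, Real.exp_neg,
    inv_mul_le_iff₀ (by positivity)]
  rwa [mul_one_add, Real.exp_add, ← mul_assoc, mul_comm] at hpow

lemma integrable_smul_of_gaussian_decay {E F : Type*} [NormedAddCommGroup E] [NormedSpace ℝ E]
    [FiniteDimensional ℝ E] [MeasurableSpace E] [BorelSpace E] {μ : Measure E}
    [μ.IsAddHaarMeasure] [NormedAddCommGroup F] [NormedSpace ℝ F] {w : E → ℝ} {f : E → F}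
    {c : ℝ} {k : ℕ} (hw : Continuous w) (hf : Continuous f) (hc : 0 < c)
    (hwc : w =O[⊤] fun x => Real.exp (-c * ‖x‖ ^ 2)) (hfk : f =O[⊤] fun x => (1 + ‖x‖) ^ k) :
    Integrable (fun x => w x • f x) μ := by
  set d := Module.finrank ℝ E + 1
  have hdecay : (fun x => w x • f x) =O[⊤] fun x => (1 + ‖x‖) ^ (-d : ℝ) := by
    refine ((hwc.trans (exp_neg_sq_isBigO_one_add_norm_inv_pow hc (k + d))).smul hfk).congr_right
      fun x => ?_
    have hpos : 0 < 1 + ‖x‖ := by positivity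
    rw [Real.rpow_neg hpos.le, Real.rpow_natCast, smul_eq_mul, pow_add]
    field_simp
  obtain ⟨K, hK⟩ := hdecay.bound
  refine ((integrable_one_add_norm (μ := μ) (r := d) (by simp [d])).const_mul K).mono'
    (hw.smul hf).aestronglyMeasurable (.of_forall fun x => ?_)
  exact (eventually_top.1 hK x).trans_eq (by rw [Real.norm_of_nonneg (by positivity)])

lemma aeval_isBigO_one_add_norm_pow {A : Type*} [NormedRing A] [NormedAlgebra ℝ A] (P : ℝ[X]) :
    (fun a : A => aeval a P) =O[⊤] fun a => (1 + ‖a‖) ^ P.natDegree := by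
  simp only [aeval_eq_sum_range]
  suffices hpow : ∀ i ∈ range (P.natDegree + 1),
      (fun a : A => a ^ i) =O[⊤] fun a => (1 + ‖a‖) ^ P.natDegree from
    .fun_sum fun i hi => (hpow i hi).const_smul_left (P.coeff i)
  intro i hi
  have hid : (fun a : A => a) =O[⊤] fun a => 1 + ‖a‖ :=
    .of_norm_le fun a => le_add_of_nonneg_left zero_le_one
  refine (hid.pow i).trans (.of_norm_le fun a => ?_)
  rw [Real.norm_of_nonneg (by positivity)]
  exact pow_le_pow_right₀ (by simp) (Nat.lt_succ_iff.1 (mem_range.1 hi))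

end GaussianDecay

section GibbsWeight

open Polynomial Asymptotics Bornology
open scoped Matrix.Norms.L2Operator

variable {n : Type*} [Fintype n] [DecidableEq n]

/-- The real vector space of Hermitian matrices, the domain of integration of the matrix model. -/
abbrev HermitianMatrix (n : Type*) : Submodule ℝ (Matrix n n ℂ) :=
  selfAdjoint.submodule ℝ (Matrix n n ℂ)

/-- The unnormalized Gibbs density `exp (-β Tr V(M))` at inverse temperature `β`. The real part is
harmless because the trace is real on Hermitian matrices. -/
def gibbsWeight (β : ℝ) (V : ℝ[X]) (M : Matrix n n ℂ) : ℝ :=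
  Real.exp (-β * (aeval M V).trace.re)

variable {β : ℝ} {V : ℝ[X]}

lemma continuous_gibbsWeight : Continuous (gibbsWeight (n := n) β V) := by
  unfold gibbsWeight
  have := V.continuous_aeval (A := Matrix n n ℂ)
  fun_prop

lemma exists_norm_sq_le_trace_aeval (hV : Tendsto V.eval (cobounded ℝ) atTop) :
    ∃ a > 0, ∃ b, ∀ M : Matrix n n ℂ, M.IsHermitian →
      a * ‖M‖ ^ 2 - b ≤ (aeval M V).trace.re := by
  obtain ⟨a, ha, b, hab⟩ := exists_quadratic_le_eval hV
  refine ⟨a, ha, b * Fintype.card n, fun M hM => ?_⟩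
  calc a * ‖M‖ ^ 2 - b * Fintype.card n ≤ a * (M ^ 2).trace.re - b * Fintype.card n := by
        gcongr
        exact norm_sq_le_trace_sq hM
    _ = (aeval M (C a * X ^ 2 - C b)).trace.re := by simp [Algebra.algebraMap_eq_smul_one]
    _ ≤ (aeval M V).trace.re := trace_aeval_re_mono hM (by simpa using hab)

lemma gibbsWeight_isBigO (hβ : 0 < β) (hV : Tendsto V.eval (cobounded ℝ) atTop) :
    ∃ c > 0, (fun M : HermitianMatrix n => gibbsWeight β V M.1) =O[⊤]
      fun M => Real.exp (-c * ‖M‖ ^ 2) := by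
  obtain ⟨a, ha, b, hab⟩ := exists_norm_sq_le_trace_aeval (n := n) hV
  refine ⟨β * a, by positivity, .of_bound (Real.exp (β * b)) (.of_forall fun M => ?_)⟩
  rw [gibbsWeight, Real.norm_of_nonneg (by positivity), Real.norm_of_nonneg (by positivity),
    ← Real.exp_add, Submodule.coe_norm]
  gcongr
  linarith [mul_le_mul_of_nonneg_left (hab M M.2) hβ.le]

variable [MeasurableSpace (HermitianMatrix n)] [BorelSpace (HermitianMatrix n)]
  {μ : Measure (HermitianMatrix n)} [μ.IsAddHaarMeasure]

lemma integrable_gibbsWeight_smul {F : Type*} [NormedAddCommGroup F] [NormedSpace ℝ F]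
    (hβ : 0 < β) (hV : Tendsto V.eval (cobounded ℝ) atTop) {f : HermitianMatrix n → F} {k : ℕ}
    (hf : Continuous f) (hfk : f =O[⊤] fun M => (1 + ‖M‖) ^ k) :
    Integrable (fun M : HermitianMatrix n => gibbsWeight β V M.1 • f M) μ := by
  obtain ⟨c, hc, hdecay⟩ := gibbsWeight_isBigO (n := n) hβ hV
  exact integrable_smul_of_gaussian_decay
    (continuous_gibbsWeight.comp continuous_subtype_val) hf hc hdecay hfk

end GibbsWeight

section SchwingerDyson

open Polynomial Asymptotics Bornology
open scoped Matrix.Norms.L2Operator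

variable {n : Type*} [Fintype n] [DecidableEq n] {β : ℝ} {V : ℝ[X]} {z : ℂ}

/-- The Gibbs weight `w` and the resolvent `G` satisfy `∂_B (w G) = w (G B G - β Tr(V'(M) B) G)`
for Hermitian `B`; this is the second factor. It is `ℂ`-linear in `B`, so it makes sense for every
matrix direction `B`. -/
def resolventVariation (β : ℝ) (V : ℝ[X]) (z : ℂ) (M B : Matrix n n ℂ) : Matrix n n ℂ :=
  resolvent M z * B * resolvent M z -
    (β * (aeval M (derivative V) * B).trace) • resolvent M z

lemma resolventVariation_add_smul (M B C : Matrix n n ℂ) (c : ℂ) :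
    resolventVariation β V z M (B + c • C) =
      resolventVariation β V z M B + c • resolventVariation β V z M C := by
  simp only [resolventVariation, mul_add, add_mul, Matrix.mul_smul, Matrix.smul_mul,
    Matrix.trace_add, Matrix.trace_smul]
  module

lemma sum_resolventVariation_single (M : Matrix n n ℂ) :
    ∑ i, ∑ j, resolventVariation β V z M (Matrix.single i j 1) i j =
      (resolvent M z).trace ^ 2 - β * (resolvent M z * aeval M (derivative V)).trace := by
  rw [Matrix.trace_mul_comm (resolvent M z)]
  simp only [resolventVariation, Matrix.sub_apply, Matrix.smul_apply, smul_eq_mul,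
    sum_sub_distrib, sum_mul_single_mul_apply, mul_assoc (β : ℂ), ← mul_sum,
    sum_trace_mul_single_mul_apply, sq]

lemma hasDerivAt_trace_aeval {F : ℝ → Matrix n n ℂ} {D : Matrix n n ℂ} {s : ℝ}
    (hF : HasDerivAt F D s) (P : ℝ[X]) :
    HasDerivAt (fun s => (aeval (F s) P).trace) (aeval (F s) (derivative P) * D).trace s :=
  hasDerivAt_tracial_aeval (τ := (Matrix.traceLinearMap n ℝ ℂ).toContinuousLinearMap)
    Matrix.trace_mul_comm hF P

lemma hasDerivAt_gibbsWeight {F : ℝ → Matrix n n ℂ} {D : Matrix n n ℂ} {s : ℝ}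
    (hF : HasDerivAt F D s) :
    HasDerivAt (fun s => gibbsWeight β V (F s))
      (gibbsWeight β V (F s) * (-β * (aeval (F s) (derivative V) * D).trace.re)) s :=
  ((Complex.reCLM.hasFDerivAt.comp_hasDerivAt s (hasDerivAt_trace_aeval hF V)).const_mul _).exp

lemma hasLineDerivAt_gibbsWeight_smul_resolvent (hz : z.im ≠ 0) (M H : HermitianMatrix n) :
    HasLineDerivAt ℝ (fun M : HermitianMatrix n => gibbsWeight β V M.1 • resolvent M.1 z)
      (gibbsWeight β V M.1 • resolventVariation β V z M H) M H := by
  have hline : HasDerivAt (fun s : ℝ => (M + s • H).1) H.1 0 := by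
    simpa using ((hasDerivAt_id (0 : ℝ)).smul_const H.1).const_add M.1
  have hresolvent := (hasFDerivAt_resolvent (𝕜 := ℝ)
    (mem_resolventSet_of_im_ne_zero (M + (0 : ℝ) • H).2 hz)).comp_hasDerivAt (0 : ℝ) hline
  refine ((hasDerivAt_gibbsWeight hline).fun_smul hresolvent).congr_deriv ?_
  have hreal : (β * (aeval M.1 (derivative V) * H.1).trace) • resolvent M.1 z =
      (β * (aeval M.1 (derivative V) * H.1).trace.re) • resolvent M.1 z := by
    rw [← Complex.coe_smul, Complex.ofReal_mul,
      ofReal_re_trace_mul (isHermitian_aeval M.2 (derivative V)) H.2]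
  simp only [zero_smul, add_zero, ContinuousLinearMap.mulLeftRight_apply, Function.comp_apply,
    resolventVariation, hreal]
  module

lemma continuous_resolvent (hz : z.im ≠ 0) :
    Continuous fun M : HermitianMatrix n => resolvent M.1 z :=
  continuous_iff_continuousAt.2 fun M =>
    (hasFDerivAt_resolvent (𝕜 := ℂ) (mem_resolventSet_of_im_ne_zero M.2 hz)).continuousAt.comp
      continuous_subtype_val.continuousAt

lemma resolvent_isBigO_one (hz : z.im ≠ 0) :
    (fun M : HermitianMatrix n => resolvent M.1 z) =O[⊤] fun _ => (1 : ℝ) :=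
  .of_bound |z.im|⁻¹ (.of_forall fun M => by simpa using norm_resolvent_le M.2 hz)

lemma trace_isBigO {α : Type*} {f : α → Matrix n n ℂ} {g : α → ℝ} {l : Filter α}
    (hf : f =O[l] g) : (fun x => (f x).trace) =O[l] g :=
  ((Matrix.traceLinearMap n ℂ ℂ).toContinuousLinearMap.isBigO_comp f l).trans hf

lemma aeval_hermitian_isBigO (P : ℝ[X]) :
    (fun M : HermitianMatrix n => aeval M.1 P) =O[⊤] fun M => (1 + ‖M‖) ^ P.natDegree :=
  (aeval_isBigO_one_add_norm_pow P).comp_tendsto tendsto_top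

lemma continuous_resolventVariation (hz : z.im ≠ 0) (B : Matrix n n ℂ) :
    Continuous fun M : HermitianMatrix n => resolventVariation β V z M.1 B := by
  have hresolvent := continuous_resolvent (n := n) hz
  have := (derivative V).continuous_aeval (A := Matrix n n ℂ)
  unfold resolventVariation
  fun_prop

lemma resolventVariation_isBigO (hz : z.im ≠ 0) (B : Matrix n n ℂ) :
    (fun M : HermitianMatrix n => resolventVariation β V z M.1 B) =O[⊤]
      fun M => (1 + ‖M‖) ^ (derivative V).natDegree := by
  have hresolvent := resolvent_isBigO_one (n := n) hz
  have hB : (fun _ : HermitianMatrix n => B) =O[⊤] fun _ => (1 : ℝ) :=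
    isBigO_const_const _ one_ne_zero _
  have hone : (fun _ : HermitianMatrix n => (1 : ℝ)) =O[⊤]
      fun M => (1 + ‖M‖) ^ (derivative V).natDegree :=
    .of_norm_le fun M => by
      rw [norm_one]
      exact one_le_pow₀ (by simp)
  have hquadratic := (hresolvent.mul hB).mul hresolvent
  have htrace := trace_isBigO ((aeval_hermitian_isBigO (n := n) (derivative V)).mul hB)
  have hlinear := (htrace.const_mul_left β).smul hresolvent
  simp only [mul_one, smul_eq_mul] at hquadratic hlinear
  exact (hquadratic.trans hone).sub hlinear

variable [MeasurableSpace (HermitianMatrix n)] [BorelSpace (HermitianMatrix n)]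
  {μ : Measure (HermitianMatrix n)} [μ.IsAddHaarMeasure]

lemma integrable_gibbsWeight_smul_resolventVariation (hβ : 0 < β)
    (hV : Tendsto V.eval (cobounded ℝ) atTop) (hz : z.im ≠ 0) (B : Matrix n n ℂ) :
    Integrable (fun M : HermitianMatrix n =>
      gibbsWeight β V M.1 • resolventVariation β V z M.1 B) μ :=
  integrable_gibbsWeight_smul hβ hV (continuous_resolventVariation hz B)
    (resolventVariation_isBigO hz B)

lemma integral_resolventVariation_hermitian (hβ : 0 < β)
    (hV : Tendsto V.eval (cobounded ℝ) atTop) (hz : z.im ≠ 0) (H : HermitianMatrix n) :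
    ∫ M : HermitianMatrix n, gibbsWeight β V M.1 • resolventVariation β V z M.1 H.1 ∂μ = 0 :=
  integral_eq_zero_of_hasLineDerivAt
    (integrable_gibbsWeight_smul (k := 0) hβ hV (continuous_resolvent hz)
      (by simpa using resolvent_isBigO_one hz))
    (integrable_gibbsWeight_smul_resolventVariation hβ hV hz H.1)
    fun M => hasLineDerivAt_gibbsWeight_smul_resolvent hz M H

lemma integral_resolventVariation (hβ : 0 < β) (hV : Tendsto V.eval (cobounded ℝ) atTop)
    (hz : z.im ≠ 0) (B : Matrix n n ℂ) :
    ∫ M : HermitianMatrix n, gibbsWeight β V M.1 • resolventVariation β V z M.1 B ∂μ = 0 := by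
  have hint := integrable_gibbsWeight_smul_resolventVariation (μ := μ) hβ hV hz
  have hzero := integral_resolventVariation_hermitian (μ := μ) hβ hV hz
  have hintI : Integrable (fun M : HermitianMatrix n => Complex.I •
      gibbsWeight β V M.1 • resolventVariation β V z M.1 (imaginaryPart B).1) μ :=
    (hint (imaginaryPart B).1).fun_smul Complex.I
  rw [← realPart_add_I_smul_imaginaryPart B]
  simp only [resolventVariation_add_smul, smul_add, smul_comm (gibbsWeight _ _ _) Complex.I]
  rw [integral_add (hint _) hintI, integral_smul, hzero (realPart B), hzero (imaginaryPart B),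
    smul_zero, add_zero]

lemma integral_sum_resolventVariation_single (hβ : 0 < β)
    (hV : Tendsto V.eval (cobounded ℝ) atTop) (hz : z.im ≠ 0) :
    ∫ M : HermitianMatrix n, gibbsWeight β V M.1 •
      ∑ i, ∑ j, resolventVariation β V z M.1 (Matrix.single i j 1) i j ∂μ = 0 := by
  let entry (i j : n) : Matrix n n ℂ →L[ℝ] ℂ :=
    (Matrix.entryLinearMap ℝ ℂ i j).toContinuousLinearMap
  have hint (i j : n) : Integrable (fun M : HermitianMatrix n =>
      gibbsWeight β V M.1 • resolventVariation β V z M.1 (Matrix.single i j 1) i j) μ :=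
    (entry i j).integrable_comp (integrable_gibbsWeight_smul_resolventVariation hβ hV hz _)
  have hzero (i j : n) : ∫ M : HermitianMatrix n,
      gibbsWeight β V M.1 • resolventVariation β V z M.1 (Matrix.single i j 1) i j ∂μ = 0 := by
    refine ((entry i j).integral_comp_comm
      (integrable_gibbsWeight_smul_resolventVariation hβ hV hz (Matrix.single i j 1))).trans ?_
    rw [integral_resolventVariation hβ hV hz, map_zero]
  simp only [smul_sum]
  rw [integral_finsetSum _ fun i _ => integrable_finsetSum _ fun j _ => hint i j]
  simp only [integral_finsetSum _ fun j _ => hint _ j, hzero, sum_const_zero]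

lemma integral_trace_resolvent_sq (hβ : 0 < β) (hV : Tendsto V.eval (cobounded ℝ) atTop)
    (hz : z.im ≠ 0) :
    ∫ M : HermitianMatrix n, gibbsWeight β V M.1 • (resolvent M.1 z).trace ^ 2 ∂μ =
      β * ∫ M : HermitianMatrix n,
        gibbsWeight β V M.1 • (resolvent M.1 z * aeval M.1 (derivative V)).trace ∂μ := by
  have hresolvent := continuous_resolvent (n := n) hz
  have hresolventO := resolvent_isBigO_one (n := n) hz
  have := (derivative V).continuous_aeval (A := Matrix n n ℂ)
  have hsq : Integrable (fun M : HermitianMatrix n =>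
      gibbsWeight β V M.1 • (resolvent M.1 z).trace ^ 2) μ :=
    integrable_gibbsWeight_smul hβ hV (k := 0) (by fun_prop)
      (by simpa using (trace_isBigO hresolventO).pow 2)
  have hmul : Integrable (fun M : HermitianMatrix n =>
      gibbsWeight β V M.1 • (resolvent M.1 z * aeval M.1 (derivative V)).trace) μ :=
    integrable_gibbsWeight_smul hβ hV (by fun_prop)
      (by simpa using trace_isBigO (hresolventO.mul (aeval_hermitian_isBigO _)))
  rw [← sub_eq_zero, ← integral_const_mul, ← integral_sub hsq (hmul.const_mul _),
    ← integral_sum_resolventVariation_single (μ := μ) hβ hV hz]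
  simp only [sum_resolventVariation_single, smul_sub, mul_smul_comm]

end SchwingerDyson

section ExternalField

open Polynomial Bornology

variable {v : ℕ} {t : ℕ → ℝ}

/-- The external field `V_t` as a polynomial. -/
def fieldPolynomial (v : ℕ) (t : ℕ → ℝ) : ℝ[X] :=
  C 2⁻¹ * X ^ 2 + ∑ j ∈ Icc 1 v, C (t j) * X ^ j

lemma eval_fieldPolynomial (x : ℝ) : (fieldPolynomial v t).eval x = Vt v t x := by
  simp only [fieldPolynomial, Vt, eval_add, eval_mul, eval_C, eval_pow, eval_X, eval_finsetSum]
  ring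

lemma aeval_fieldPolynomial {N : ℕ} (M : Matrix (Fin N) (Fin N) ℂ) :
    aeval M (fieldPolynomial v t) = VtM v N t M := by
  simp [fieldPolynomial, VtM, ← smul_eq_C_mul, ← Complex.coe_smul]

lemma derivative_fieldPolynomial :
    derivative (fieldPolynomial v t) = X + ∑ j ∈ Icc 1 v, C (j * t j) * X ^ (j - 1) := by
  have hsquare : derivative (C (2⁻¹ : ℝ) * X ^ 2) = X := by
    rw [derivative_C_mul_X_pow, Nat.cast_ofNat, inv_mul_cancel₀ two_ne_zero, C_1, one_mul, pow_one]
  rw [fieldPolynomial, derivative_add, hsquare, derivative_sum]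
  simp only [derivative_C_mul_X_pow, mul_comm (t _)]

lemma aeval_derivative_fieldPolynomial {N : ℕ} (M : Matrix (Fin N) (Fin N) ℂ) :
    aeval M (derivative (fieldPolynomial v t)) = Vt'M v N t M := by
  simp only [derivative_fieldPolynomial, Vt'M, ← smul_eq_C_mul, map_add, map_sum, map_smul,
    map_pow, aeval_X, ← Complex.coe_smul, Complex.ofReal_mul, Complex.ofReal_natCast]

lemma tendsto_Vt_cobounded (hv : v ≠ 0) (hve : Even v) (ht : 0 < t v) :
    Tendsto (Vt v t) (cobounded ℝ) atTop := by
  set P : ℝ[X] := ∑ j ∈ Icc 1 v, C (t j) * X ^ j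
  have hcoeff : P.coeff v = t v := by
    simp [P, coeff_X_pow, Nat.one_le_iff_ne_zero, hv]
  have hdeg : P.natDegree = v := by
    refine natDegree_eq_of_le_of_coeff_ne_zero ?_ (hcoeff.trans_ne ht.ne')
    exact natDegree_sum_le_of_forall_le _ _ fun j hj =>
      (natDegree_C_mul_X_pow_le _ _).trans (mem_Icc.1 hj).2
  have hP : Tendsto P.eval (cobounded ℝ) atTop :=
    tendsto_eval_cobounded_atTop (by rwa [hdeg]) (by rwa [hdeg])
      (by rwa [leadingCoeff, hdeg, hcoeff])
  refine tendsto_atTop_mono (fun x => ?_) hP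
  simp only [P, Vt, eval_finsetSum, eval_mul, eval_C, eval_pow, eval_X]
  exact le_add_of_nonneg_left (by positivity)

end ExternalField

section Coordinates

open Polynomial Bornology
open scoped Matrix.Norms.L2Operator

variable {v N : ℕ} {t : ℕ → ℝ} {z : ℂ}

lemma isHermitian_herm (e : coords N) : (herm N e).IsHermitian := by
  ext i j
  rw [Matrix.conjTranspose_apply]
  unfold herm
  split_ifs with hji hij hij
  · exact absurd hij hji.not_gt
  · simp [Complex.ext_iff]
  · simp [Complex.ext_iff]
  · simp [le_antisymm (not_lt.1 hji) (not_lt.1 hij)]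

/-- The real coordinates `coords N` as a linear chart of the space of Hermitian matrices. -/
def hermEquiv (N : ℕ) : coords N ≃ₗ[ℝ] HermitianMatrix (Fin N) where
  toFun e := ⟨herm N e, isHermitian_herm e⟩
  map_add' e e' := by
    ext i j
    simp only [herm, Submodule.coe_add, Matrix.add_apply]
    split_ifs <;> simp [Complex.ext_iff, add_comm]
  map_smul' c e := by
    ext i j
    simp only [herm, Submodule.coe_smul, Matrix.smul_apply]
    split_ifs <;> simp [Complex.ext_iff]
  invFun M := (fun i => (M.1 i i).re, fun p => ((M.1 p.1.1 p.1.2).re, (M.1 p.1.1 p.1.2).im))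
  left_inv e := by
    ext p <;> simp [herm, p.2]
  right_inv M := by
    have hM : M.1.IsHermitian := M.2
    ext i j
    rcases lt_trichotomy i j with h | rfl | h
    · simp [herm, h]
    · simpa [herm] using hM.coe_re_apply_self i
    · rw [← hM.apply i j]
      apply Complex.ext <;> simp [herm, h, h.not_gt]

lemma G_eq_resolvent (M : Matrix (Fin N) (Fin N) ℂ) : G N z M = resolvent M z := by
  rw [G, resolvent, Matrix.nonsing_inv_eq_ringInverse, Algebra.algebraMap_eq_smul_one]

lemma wt_eq_gibbsWeight (e : coords N) :
    wt v N t e = gibbsWeight N (fieldPolynomial v t) (herm N e) := by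
  rw [wt, gibbsWeight, aeval_fieldPolynomial]

instance isAddHaarMeasure_volume_coords : (volume : Measure (coords N)).IsAddHaarMeasure := by
  have hprod : (volume : Measure (ℝ × ℝ)).IsAddHaarMeasure :=
    inferInstanceAs ((volume : Measure ℝ).prod volume).IsAddHaarMeasure
  have hpi : (volume : Measure ({p : Fin N × Fin N // p.1 < p.2} → ℝ × ℝ)).IsAddHaarMeasure :=
    inferInstanceAs (Measure.pi fun _ => volume).IsAddHaarMeasure
  exact Measure.prod.instIsAddHaarMeasure volume volume

lemma integral_trace_G_sq (hV : Tendsto (Vt v t) (cobounded ℝ) atTop) (hN : 1 ≤ N)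
    (hz : z.im ≠ 0) :
    ∫ e : coords N, (G N z (herm N e)).trace ^ 2 * (wt v N t e : ℂ) =
      N * ∫ e : coords N, (G N z (herm N e) * Vt'M v N t (herm N e)).trace * (wt v N t e : ℂ) := by
  borelize ↥(HermitianMatrix (Fin N))
  let chart := (hermEquiv N).toContinuousLinearEquiv
  have hchart := chart.toHomeomorph.measurableEmbedding
  have hμ : (volume.map chart).IsAddHaarMeasure := chart.isAddHaarMeasure_map volume
  have hfield : Tendsto (fieldPolynomial v t).eval (cobounded ℝ) atTop :=
    hV.congr fun x => (eval_fieldPolynomial x).symm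
  have hidentity := integral_trace_resolvent_sq (μ := volume.map chart) (β := N)
    (Nat.cast_pos.2 hN) hfield hz
  simp only [G_eq_resolvent, ← aeval_derivative_fieldPolynomial, wt_eq_gibbsWeight,
    mul_comm _ (Complex.ofReal _), ← Complex.coe_smul, smul_eq_mul] at hidentity ⊢
  exact (hchart.integral_map _).symm.trans (hidentity.trans (congrArg _ (hchart.integral_map _)))

theorem expectation_trace_resolvent_identity_general (v N : ℕ) (t : ℕ → ℝ)
    (hV : Tendsto (Vt v t) (cobounded ℝ) atTop) (hN : 1 ≤ N) (z : ℂ) (hz : z.im ≠ 0) :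
    Em v N t (fun e => (Matrix.trace (G N z (herm N e))) ^ 2) =
      (N : ℂ) * Em v N t (fun e => Matrix.trace (G N z (herm N e) * Vt'M v N t (herm N e))) := by
  unfold Em
  rw [integral_trace_G_sq hV hN hz, mul_div_assoc]

end Coordinates

/-- For every `N ≥ 1` and every `z ∈ ℂ` with `Im z ≠ 0`,
`E((Tr G(z,M))²) = N ⬝ E(Tr (G(z,M) ⬝ V_t'(M)))`. -/
theorem expectation_trace_resolvent_identity (v N : ℕ) (hv : 2 ≤ v) (hve : Even v)
    (t : ℕ → ℝ) (ht : 0 < t v) (hN : 1 ≤ N) (z : ℂ) (hz : z.im ≠ 0) :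
    Em v N t (fun e => (Matrix.trace (G N z (herm N e))) ^ 2) =
      (N : ℂ) * Em v N t (fun e => Matrix.trace (G N z (herm N e) * Vt'M v N t (herm N e))) :=
  expectation_trace_resolvent_identity_general v N t
    (tendsto_Vt_cobounded (by omega) hve ht) hN z hz

end LoopEq
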